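/- arXiv:1907.01495 — 4 statements merged into one kernel-verified Lean document; each statement's English description precedes it below -/
import Mathlib

section
/- Let V be a finite set, I a finite index set, A : I → Finset V a family of subsets of V, and σ a permutation of I. If there exists a nonempty subset J₁ ⊆ I with ℓ(I, J₁) ≠ ℓ(I, σ(J₁)), then there exist a subset J₂ ⊆ I and a nonempty subset J₃ ⊆ J₂ such that ℓ(J₂, J₃) ≠ ℓ(σ(J₂), σ(J₃)), and moreover either |J₂| ≤ 2 or for all distinct i, j ∈ J₂ the set A(i) is not a subset of A(j) (i.e., the sets indexed by J₂ form an antichain under inclusion). -/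
/-- The Venn cell cardinality `ℓ(J, J')` of a family `A : I → Finset V`:
the number of elements of `V` lying in every set `A i` for `i ∈ J'` and in
no set `A i` for `i ∈ J \ J'`. -/
def vennCard {V I : Type*} [Fintype V] [DecidableEq V] [DecidableEq I]
    (A : I → Finset V) (J J' : Finset I) : ℕ :=
  ((J'.inf A) \ ((J \ J').sup A)).card

/-- A subset `J` of the index set is *Venn-good* for a permutation `σ` if
`ℓ(J, J') = ℓ(σ(J), σ(J'))` for every nonempty `J' ⊆ J`. -/
def VennGood {V I : Type*} [Fintype V] [DecidableEq V] [DecidableEq I]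
    (A : I → Finset V) (σ : Equiv.Perm I) (J : Finset I) : Prop :=
  ∀ J' ⊆ J, J'.Nonempty →
    vennCard A J J' = vennCard A (J.image σ) (J'.image σ)

theorem mem_vennCell {V I : Type*} [Fintype V] [DecidableEq V] [DecidableEq I]
    (A : I → Finset V) (J K : Finset I) (x : V) :
    x ∈ (K.inf A) \ ((J \ K).sup A) ↔
      (∀ i ∈ K, x ∈ A i) ∧ ∀ i ∈ J, i ∉ K → x ∉ A i := by
  simp only [Finset.mem_sdiff, Finset.mem_inf, Finset.mem_sup, not_exists, not_and, and_imp]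

theorem vennCard_erase {V I : Type*} [Fintype V] [DecidableEq V] [DecidableEq I]
    (A : I → Finset V) (J K : Finset I) (k : I) (hk : k ∈ J) (hK : k ∉ K) :
    vennCard A (J.erase k) K = vennCard A J K + vennCard A J (insert k K) := by
  unfold vennCard
  rw [← Finset.card_union_of_disjoint]
  · congr 1
    ext x
    rw [Finset.mem_union, mem_vennCell, mem_vennCell, mem_vennCell]
    by_cases hx : x ∈ A k <;> grind
  · rw [Finset.disjoint_left]
    intro x h1 h2
    rw [mem_vennCell] at h1 h2
    exact h1.2 k hk hK (h2.1 k (Finset.mem_insert_self _ _))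

theorem vennCard_zero {V I : Type*} [Fintype V] [DecidableEq V] [DecidableEq I]
    (A : I → Finset V) (J K : Finset I) (i j : I) (hi : i ∈ K) (hj : j ∈ J) (hjK : j ∉ K)
    (h : A i ⊆ A j) : vennCard A J K = 0 := by
  unfold vennCard
  rw [Finset.card_eq_zero, Finset.eq_empty_iff_forall_notMem]
  intro x hx
  rw [mem_vennCell] at hx
  exact hx.2 j hj hjK (h (hx.1 i hi))

theorem vennGood_step {V I : Type*} [Fintype V] [DecidableEq V] [DecidableEq I]
    (A : I → Finset V) (σ : Equiv.Perm I) (J : Finset I) (i j : I) (hi : i ∈ J) (hj : j ∈ J)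
    (hij : i ≠ j) (hA : A i ⊆ A j) (hJ : 2 < J.card)
    (ih : ∀ K : Finset I, K.card < J.card → VennGood A σ K) : VennGood A σ J := by
  have hB : A (σ i) ⊆ A (σ j) := by
    have h := ih {i, j} (by rw [Finset.card_pair hij]; exact hJ) {i} (by simp) (by simp)
    rw [vennCard_zero A {i, j} {i} i j (by simp) (by simp) (by simpa using hij.symm) hA] at h
    unfold vennCard at h
    have h := Finset.card_eq_zero.1 h.symm
    intro x hx
    by_contra hx2
    have : x ∈ (∅ : Finset V) := by
      rw [← h, mem_vennCell]
      simp [hx, hx2]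
    simp at this
  have mi : ∀ (k : I) (K : Finset I), σ k ∈ K.image σ ↔ k ∈ K := by intro k K; simp
  have z : ∀ K : Finset I, i ∈ K → j ∉ K →
      vennCard A J K = 0 ∧ vennCard A (J.image σ) (K.image σ) = 0 := fun K h1 h2 =>
    ⟨vennCard_zero A J K i j h1 hj h2 hA,
      vennCard_zero A _ _ (σ i) (σ j) ((mi _ _).2 h1) ((mi _ _).2 hj)
        (fun h => h2 ((mi _ _).1 h)) hB⟩
  have e : ∀ (k : I) (K : Finset I), k ∈ J → k ∉ K → K ⊆ J → K.Nonempty →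
      vennCard A J K + vennCard A J (insert k K) =
      vennCard A (J.image σ) (K.image σ) + vennCard A (J.image σ) ((insert k K).image σ) := by
    intro k K hk hK hKJ hne
    have h := ih (J.erase k) (Finset.card_erase_lt_of_mem hk) K
      (Finset.subset_erase.2 ⟨hKJ, hK⟩) hne
    rw [vennCard_erase A J K k hk hK, Finset.image_erase σ.injective,
      vennCard_erase A _ _ (σ k) ((mi _ _).2 hk) (fun h => hK ((mi _ _).1 h)),
      ← Finset.image_insert] at h
    exact h
  have both : ∀ K : Finset I, K ⊆ J → i ∈ K → j ∈ K →
      vennCard A J K = vennCard A (J.image σ) (K.image σ) := by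
    intro K hK h1 h2
    have h1' : i ∈ K.erase j := Finset.mem_erase.2 ⟨hij, h1⟩
    have h := e j (K.erase j) hj (Finset.notMem_erase _ _)
      ((Finset.erase_subset _ _).trans hK) ⟨i, h1'⟩
    have hz := z (K.erase j) h1' (Finset.notMem_erase _ _)
    rw [Finset.insert_erase h2] at h
    omega
  intro K hK hne
  by_cases h1 : i ∈ K
  · by_cases h2 : j ∈ K
    · exact both K hK h1 h2
    · have := z K h1 h2
      omega
  · have h := e i K hi h1 hK hne
    by_cases h2 : j ∈ K
    · have := both (insert i K) (Finset.insert_subset hi hK) (Finset.mem_insert_self _ _)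
        (Finset.mem_insert_of_mem h2)
      omega
    · have := z (insert i K) (Finset.mem_insert_self _ _)
        (by simp [hij.symm, h2])
      omega

/-- If a permutation `σ` of the index set fails to preserve some cell of the
cardinality Venn diagram of the full family, then the failure is witnessed by
a subfamily `J₂` (with witness cell `J₃ ⊆ J₂`) such that `|J₂| ≤ 2` or the
sets indexed by `J₂` form an antichain under inclusion. -/
theorem venn_failure_antichain_witness {V I : Type*}
    [Fintype V] [DecidableEq V] [Fintype I] [DecidableEq I]
    (A : I → Finset V) (σ : Equiv.Perm I)
    (J₁ : Finset I) (h₁ : J₁.Nonempty)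
    (h₂ : vennCard A Finset.univ J₁ ≠ vennCard A Finset.univ (J₁.image σ)) :
    ∃ J₂ J₃ : Finset I, J₃ ⊆ J₂ ∧ J₃.Nonempty ∧
      vennCard A J₂ J₃ ≠ vennCard A (J₂.image σ) (J₃.image σ) ∧
      (J₂.card ≤ 2 ∨ ∀ i ∈ J₂, ∀ j ∈ J₂, i ≠ j → ¬ A i ⊆ A j) := by
  by_contra hcon
  push Not at hcon
  have good : ∀ n : ℕ, ∀ J : Finset I, J.card = n → VennGood A σ J := by
    intro n
    induction n using Nat.strong_induction_on with
    | _ n ih =>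
      intro J hJ
      by_contra hbad
      have hbad' := hbad
      unfold VennGood at hbad'
      push Not at hbad'
      obtain ⟨K, hKJ, hne, hK⟩ := hbad'
      obtain ⟨h2, i, hi, j, hj, hij, hA⟩ := hcon J K hKJ hne hK
      exact hbad (vennGood_step A σ J i j hi hj hij hA h2
        (fun K hK => ih K.card (hJ ▸ hK) K rfl))
  have h := good _ Finset.univ rfl J₁ (Finset.subset_univ _) h₁
  rw [Finset.image_univ_equiv] at h
  exact h₂ h
end

section
/- Let V be a finite set, I a finite index set, A : I → Finset V a family of subsets of V, and σ a permutation of I. If J₁ ⊆ J₂ ⊆ I and J₂ is Venn-good for σ, then J₁ is Venn-good for σ. -/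
/-- Membership description of a Venn cell, adding one more index `a`. -/
theorem vennCard_split {V I : Type*} [Fintype V] [DecidableEq V] [DecidableEq I]
    (A : I → Finset V) (J J' : Finset I) (a : I) (ha : a ∉ J) (hJ : J' ⊆ J) :
    vennCard A J J' =
      vennCard A (insert a J) J' + vennCard A (insert a J) (insert a J') := by
  have ha' : a ∉ J' := fun h => ha (hJ h)
  have h1 : insert a J \ J' = insert a (J \ J') := Finset.insert_sdiff_of_notMem _ ha'
  have h2 : insert a J \ insert a J' = J \ J' := by
    ext x
    simp only [Finset.mem_sdiff, Finset.mem_insert]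
    constructor
    · tauto
    · rintro ⟨hx, hx'⟩
      have : x ≠ a := fun h => ha (h ▸ hx)
      tauto
  unfold vennCard
  rw [h1, h2, Finset.sup_insert, Finset.inf_insert]
  rw [← Finset.card_union_of_disjoint]
  · congr 1
    ext x
    simp only [Finset.mem_sdiff, Finset.mem_union, Finset.sup_eq_union, Finset.inf_eq_inter,
      Finset.mem_inter]
    tauto
  · rw [Finset.disjoint_left]
    intro x
    simp only [Finset.mem_sdiff, Finset.mem_union, Finset.sup_eq_union, Finset.inf_eq_inter,
      Finset.mem_inter]
    tauto

theorem vennGood_of_insert {V I : Type*} [Fintype V] [DecidableEq V] [DecidableEq I]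
    (A : I → Finset V) (σ : Equiv.Perm I) (J : Finset I) (a : I)
    (h : VennGood A σ (insert a J)) : VennGood A σ J := by
  by_cases ha : a ∈ J
  · rwa [Finset.insert_eq_of_mem ha] at h
  intro J' hJ hne
  have hσ : σ a ∉ J.image σ := by simpa using ha
  rw [vennCard_split A J J' a ha hJ,
    vennCard_split A (J.image σ) (J'.image σ) (σ a) hσ (Finset.image_subset_image hJ),
    ← Finset.image_insert, ← Finset.image_insert,
    h J' (hJ.trans (Finset.subset_insert _ _)) hne,
    h (insert a J') (Finset.insert_subset_insert _ hJ) (Finset.insert_nonempty _ _)]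

/-- Venn-goodness is monotone: if `J₁ ⊆ J₂` and `J₂` is Venn-good for `σ`,
then so is `J₁`. -/
theorem vennGood_mono {V I : Type*}
    [Fintype V] [DecidableEq V] [Fintype I] [DecidableEq I]
    (A : I → Finset V) (σ : Equiv.Perm I) (J₁ J₂ : Finset I)
    (hsub : J₁ ⊆ J₂) (hgood : VennGood A σ J₂) :
    VennGood A σ J₁ := by
  have key : ∀ K : Finset I, VennGood A σ (K ∪ J₁) → VennGood A σ J₁ := by
    intro K
    induction K using Finset.induction_on with
    | empty => intro h; simpa using h
    | insert a K _ ih =>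
      intro h
      rw [Finset.insert_union] at h
      exact ih (vennGood_of_insert A σ _ a h)
  apply key J₂
  rwa [Finset.union_eq_left.mpr hsub]
end

section
/- Let V be a finite set, I a finite index set, A : I → Finset V a family of subsets of V, σ a permutation of I, and d ≥ 1. Assume that every subset J ⊆ I with the property that A(i) is not a subset of A(j) for all distinct i, j ∈ J (i.e., the sets indexed by J form an antichain under inclusion) satisfies |J| ≤ d. Then the full index set I is Venn-good for σ if and only if every subset J ⊆ I with |J| ≤ max(2, d) is Venn-good for σ. -/
theorem vennCard_image_aux {V I : Type*} [Fintype V] [DecidableEq V] [DecidableEq I]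
    (A : I → Finset V) (σ : Equiv.Perm I) (J J' : Finset I) :
    vennCard A (J.image σ) (J'.image σ) = vennCard (A ∘ σ) J J' := by
  unfold vennCard
  rw [← Finset.image_sdiff _ _ σ.injective, Finset.inf_image, Finset.sup_image]

theorem cell_split_aux {V I : Type*} [Fintype V] [DecidableEq V] [DecidableEq I]
    (A : I → Finset V) (P N : Finset I) (a : I) :
    (P.inf A \ N.sup A).card =
      (P.inf A \ (insert a N).sup A).card + ((insert a P).inf A \ N.sup A).card := by
  rw [Finset.inf_insert, Finset.sup_insert,
    ← Finset.card_sdiff_add_card_inter (P.inf A \ N.sup A) (A a)]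
  congr 2
  · ext x
    simp only [Finset.mem_sdiff, Finset.sup_eq_union, Finset.mem_union]
    tauto
  · ext x
    simp only [Finset.mem_sdiff, Finset.inf_eq_inter, Finset.mem_inter]
    tauto

theorem vennGood_iff_inf_aux {V I : Type*} [Fintype V] [DecidableEq V] [DecidableEq I]
    (A : I → Finset V) (σ : Equiv.Perm I) (J : Finset I) :
    VennGood A σ J ↔ ∀ K ⊆ J, K.Nonempty → (K.inf A).card = (K.inf (A ∘ σ)).card := by
  unfold VennGood
  simp only [vennCard_image_aux]
  constructor
  · intro h K hK hne
    have key : ∀ R P N : Finset I, J \ (P ∪ N) = R → P ⊆ J → N ⊆ J → Disjoint P N →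
        P.Nonempty →
        (P.inf A \ N.sup A).card = (P.inf (A ∘ σ) \ N.sup (A ∘ σ)).card := by
      intro R
      induction R using Finset.induction_on with
      | empty =>
        intro P N hR hP hN hd hne
        have : N = J \ P := by
          ext x
          have h1 := Finset.sdiff_eq_empty_iff_subset.1 hR
          constructor
          · intro hx
            exact Finset.mem_sdiff.2 ⟨hN hx, fun hx' => Finset.disjoint_left.1 hd hx' hx⟩
          · intro hx
            have hx := Finset.mem_sdiff.1 hx
            exact (Finset.mem_union.1 (h1 hx.1)).resolve_left hx.2
        subst this
        exact h P hP hne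
      | insert a R ha ih =>
        intro P N hR hP hN hd hne
        have haR : a ∈ J \ (P ∪ N) := hR ▸ Finset.mem_insert_self a R
        simp only [Finset.mem_sdiff, Finset.mem_union, not_or] at haR
        obtain ⟨haJ, haP, haN⟩ := haR
        have hR' : (J \ (P ∪ N)).erase a = R := by rw [hR, Finset.erase_insert ha]
        rw [cell_split_aux A P N a, cell_split_aux (A ∘ σ) P N a]
        congr 1
        · apply ih
          · rw [← hR']; ext x; simp; tauto
          · exact hP
          · exact Finset.insert_subset haJ hN
          · exact Finset.disjoint_insert_right.2 ⟨haP, hd⟩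
          · exact hne
        · apply ih
          · rw [← hR']; ext x; simp; tauto
          · exact Finset.insert_subset haJ hP
          · exact hN
          · exact Finset.disjoint_insert_left.2 ⟨haN, hd⟩
          · exact Finset.insert_nonempty _ _
    simpa using key _ K ∅ rfl hK (by simp) (by simp) hne
  · intro h J' hJ' hne
    have key : ∀ N P : Finset I, P ⊆ J → N ⊆ J → P.Nonempty →
        (P.inf A \ N.sup A).card = (P.inf (A ∘ σ) \ N.sup (A ∘ σ)).card := by
      intro N
      induction N using Finset.induction_on with
      | empty => intro P hP _ hne; simpa using h P hP hne
      | insert a N ha ih =>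
        intro P hP hN hne
        have haJ : a ∈ J := hN (Finset.mem_insert_self a N)
        have hNJ : N ⊆ J := (Finset.subset_insert a N).trans hN
        have h1 := cell_split_aux A P N a
        have h2 := cell_split_aux (A ∘ σ) P N a
        have h3 := ih P hP hNJ hne
        have h4 := ih (insert a P) (Finset.insert_subset haJ hP) hNJ (Finset.insert_nonempty _ _)
        omega
    exact key _ _ hJ' Finset.sdiff_subset hne

theorem inf_erase_aux {V I : Type*} [Fintype V] [DecidableEq V] [DecidableEq I]
    (A : I → Finset V) (K : Finset I) (i j : I) (hi : i ∈ K) (hj : j ∈ K) (hij : i ≠ j)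
    (h : A i ⊆ A j) : (K.erase j).inf A = K.inf A := by
  conv_rhs => rw [← Finset.insert_erase hj, Finset.inf_insert]
  exact (inf_eq_right.2
    ((Finset.inf_le (Finset.mem_erase.2 ⟨hij, hi⟩)).trans h)).symm

/-- If every inclusion-antichain in the family `A` has at most `d ≥ 1` members,
then the full index set is Venn-good for `σ` iff every subset of size at most
`max 2 d` is Venn-good for `σ`. -/
theorem vennGood_iff_small_subsets {V I : Type*}
    [Fintype V] [DecidableEq V] [Fintype I] [DecidableEq I]
    (A : I → Finset V) (σ : Equiv.Perm I) (d : ℕ) (hd : 1 ≤ d)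
    (hanti : ∀ J : Finset I,
      (∀ i ∈ J, ∀ j ∈ J, i ≠ j → ¬ A i ⊆ A j) → J.card ≤ d) :
    VennGood A σ Finset.univ ↔
      ∀ J : Finset I, J.card ≤ max 2 d → VennGood A σ J := by
  constructor
  · intro h J _
    rw [vennGood_iff_inf_aux] at h ⊢
    exact fun K _ hne => h K (Finset.subset_univ _) hne
  · intro h
    have hs : ∀ K : Finset I, K.card ≤ max 2 d → K.Nonempty →
        (K.inf A).card = (K.inf (A ∘ σ)).card := fun K hK hne =>
      (vennGood_iff_inf_aux A σ K).1 (h K hK) K (Finset.Subset.refl _) hne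
    have hsub : ∀ i j, A i ⊆ A j → (A ∘ σ) i ⊆ (A ∘ σ) j := by
      intro i j hij
      have h1 := hs {i} (by simp) (by simp)
      have h2 := hs {i, j} (Finset.card_le_two.trans (le_max_left _ _)) (by simp)
      simp only [Finset.inf_insert, Finset.inf_singleton, Finset.inf_eq_inter] at h1 h2
      rw [Finset.inter_eq_left.2 hij] at h2
      exact Finset.inter_eq_left.1
        (Finset.eq_of_subset_of_card_le Finset.inter_subset_left (by omega))
    rw [vennGood_iff_inf_aux]
    intro K _
    induction K using Finset.strongInduction with
    | H K ih =>
      intro hne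
      by_cases hK : ∀ i ∈ K, ∀ j ∈ K, i ≠ j → ¬ A i ⊆ A j
      · exact hs K ((hanti K hK).trans (le_max_right _ _)) hne
      · push Not at hK
        obtain ⟨i, hi, j, hj, hij, hA⟩ := hK
        rw [← inf_erase_aux A K i j hi hj hij hA,
          ← inf_erase_aux (A ∘ σ) K i j hi hj hij (hsub i j hA)]
        exact ih _ (Finset.erase_ssubset hj) (Finset.subset_univ _)
          ⟨i, Finset.mem_erase.2 ⟨hij, hi⟩⟩
end

section
/- Let V be a finite set, I a finite index set, A : I → Finset V a family of subsets of V, and σ a permutation of I. Then there exists a permutation f of V such that f maps A(i) onto A(σ(i)) for every i ∈ I, if and only if ℓ(I, J) = ℓ(I, σ(J)) holds for every nonempty J ⊆ I. -/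
theorem vennCard_univ_eq {V I : Type*}
    [Fintype V] [DecidableEq V] [Fintype I] [DecidableEq I]
    (A : I → Finset V) (J : Finset I) :
    vennCard A Finset.univ J =
      (Finset.univ.filter fun v => (Finset.univ.filter fun i => v ∈ A i) = J).card := by
  unfold vennCard
  congr 1
  ext v
  simp only [Finset.mem_sdiff, Finset.mem_inf, Finset.mem_sup, Finset.mem_univ, true_and,
    Finset.mem_filter, Finset.ext_iff]
  constructor
  · rintro ⟨h1, h2⟩ i
    exact ⟨fun h => by_contra fun h' => h2 ⟨i, h', h⟩, h1 i⟩
  · intro h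
    exact ⟨fun i hi => (h i).2 hi, fun ⟨i, hi, hv⟩ => hi ((h i).1 hv)⟩

theorem exists_perm_of_fibers {V K : Type*} [Fintype V] [DecidableEq K]
    (g t : V → K)
    (h : ∀ k, (Finset.univ.filter fun v => g v = k).card
      = (Finset.univ.filter fun v => t v = k).card) :
    ∃ f : Equiv.Perm V, ∀ v, t (f v) = g v := by
  have e : ∀ k, Nonempty ({v // g v = k} ≃ {v // t v = k}) := fun k => by
    apply Fintype.card_eq.1
    rw [Fintype.card_subtype, Fintype.card_subtype, h k]
  replace e := fun k => (e k).some
  refine ⟨((Equiv.sigmaFiberEquiv g).symm.trans (Equiv.sigmaCongrRight e)).trans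
    (Equiv.sigmaFiberEquiv t), fun v => ?_⟩
  exact (e (g v) ⟨v, rfl⟩).2

/-- There is a permutation `f` of the ground set mapping `A i` onto `A (σ i)`
for every `i` iff `σ` preserves all cells of the cardinality Venn diagram. -/
theorem exists_perm_iff_venn {V I : Type*}
    [Fintype V] [DecidableEq V] [Fintype I] [DecidableEq I]
    (A : I → Finset V) (σ : Equiv.Perm I) :
    (∃ f : Equiv.Perm V, ∀ i : I, (A i).image f = A (σ i)) ↔
      ∀ J : Finset I, J.Nonempty →
        vennCard A Finset.univ J = vennCard A Finset.univ (J.image σ) := by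
  simp only [vennCard_univ_eq]
  constructor
  · rintro ⟨f, hf⟩ J -
    have key : ∀ v i, f v ∈ A (σ i) ↔ v ∈ A i := by
      intro v i
      rw [← hf i]
      simp
    refine Finset.card_equiv f fun v => ?_
    have : (Finset.univ.filter fun i => f v ∈ A i)
        = (Finset.univ.filter fun i => v ∈ A i).image σ := by
      ext j
      obtain ⟨i, rfl⟩ := σ.surjective j
      simp [key]
    simp only [Finset.mem_filter, Finset.mem_univ, true_and, this]
    exact (Finset.image_injective σ.injective).eq_iff.symm
  · intro h
    have hinj := Finset.image_injective σ.injective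
    have hsurj : ∀ K : Finset I, ∃ J : Finset I, J.image σ = K := fun K =>
      ⟨K.image σ.symm, by simp [Finset.image_image]⟩
    have hne : ∀ K : Finset I, K ≠ ∅ →
        (Finset.univ.filter fun v => (Finset.univ.filter fun i => v ∈ A i).image σ = K).card
        = (Finset.univ.filter fun v => (Finset.univ.filter fun i => v ∈ A i) = K).card := by
      intro K hK
      obtain ⟨J, rfl⟩ := hsurj K
      rw [← h J (by
        rw [Finset.nonempty_iff_ne_empty]
        rintro rfl
        simp at hK)]
      simp only [hinj.eq_iff]
    obtain ⟨f, hf⟩ := exists_perm_of_fibers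
      (fun v => (Finset.univ.filter fun i => v ∈ A i).image σ)
      (fun v => Finset.univ.filter fun i => v ∈ A i) (by
        intro K
        by_cases hK : K = ∅
        · subst hK
          simp only [Finset.image_eq_empty]
        · exact hne K hK)
    refine ⟨f, fun i => ?_⟩
    have key : ∀ v, f v ∈ A (σ i) ↔ v ∈ A i := by
      intro v
      have := Finset.ext_iff.1 (hf v) (σ i)
      simpa using this
    ext w
    obtain ⟨v, rfl⟩ := f.surjective w
    simp [key]
end
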